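/- For L ≥ 2, every f_L ∈ Y_{n₁,…,n_{L−1}} can be represented as a CPL spline function: there exist N ≤ ∏_{ℓ=1}^{L−1}(n_ℓ + 1) − 1, real coefficients q₀, q₁, α₁, …, α_N and strictly ordered knots ξ₁ < ξ₂ < … < ξ_N such that f_L(t) = q₁·t + q₀ + Σ_{k=1}^{N} α_k·σ(t − ξ_k) for all t ∈ ℝ; moreover q₁ = lim_{t→−∞} f_L′(t) and q₀ = lim_{t→−∞} (f_L(t) − q₁·t). -/

import Mathlib

/-- The ReLU function `σ(x) = max(x,0)`. -/
noncomputable def relu (x : ℝ) : ℝ := max x 0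

/-- `f` belongs to the deep ReLU network class `Y_{n₁,…,n_{L−1}}` with `L−1` hidden
layers of widths `n 1, …, n (L−1)` (input and output dimension `1`):
`F₁(t) = t·A¹ + b¹`, `F_ℓ(t) = A^ℓ σ(F_{ℓ−1}(t)) + t·c^ℓ + b^ℓ` for `ℓ = 2,…,L−1`, and
`f(t) = A^L σ(F_{L−1}(t)) + t·c^L + b^L`. -/
def IsDeepReLU (L : ℕ) (n : ℕ → ℕ) (f : ℝ → ℝ) : Prop :=
  ∃ (F : (ℓ : ℕ) → ℝ → Fin (n ℓ) → ℝ)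
    (A1 : Fin (n 1) → ℝ)
    (A : (ℓ : ℕ) → Fin (n ℓ) → Fin (n (ℓ - 1)) → ℝ)
    (b c : (ℓ : ℕ) → Fin (n ℓ) → ℝ)
    (AL : Fin (n (L - 1)) → ℝ) (cL bL : ℝ),
    (∀ t i, F 1 t i = t * A1 i + b 1 i) ∧
    (∀ ℓ, 2 ≤ ℓ → ℓ ≤ L - 1 → ∀ t i,
      F ℓ t i = (∑ k, A ℓ i k * relu (F (ℓ - 1) t k)) + t * c ℓ i + b ℓ i) ∧
    (∀ t, f t = (∑ k, AL k * relu (F (L - 1) t k)) + t * cL + bL)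

/-!
Composing a spline with `σ` creates at most one new knot in each of its pieces, so a spline with
`m` knots acquires at most `m + 1` new ones. The neurons of a layer are splines over a common knot
set; if that set has `m` elements, the `n` activations of the layer are therefore splines over a
common set of at most `m + n (m + 1)` knots, that is, `m + 1` is multiplied by at most `n + 1`.
-/

open Set Filter

theorem relu_of_nonneg {x : ℝ} (hx : 0 ≤ x) : relu x = x := max_eq_left hx

theorem relu_of_nonpos {x : ℝ} (hx : x ≤ 0) : relu x = 0 := max_eq_right hx

theorem relu_neg (x : ℝ) : relu (-x) = relu x - x := by
  rcases le_total 0 x with hx | hx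
  · rw [relu_of_nonneg hx, relu_of_nonpos (neg_nonpos.2 hx), sub_self]
  · rw [relu_of_nonpos hx, relu_of_nonneg (neg_nonneg.2 hx), zero_sub]

theorem relu_mul_of_nonneg {c : ℝ} (hc : 0 ≤ c) (x : ℝ) : relu (c * x) = c * relu x := by
  simp only [relu, mul_max_of_nonneg _ _ hc, mul_zero]

theorem relu_mul_of_nonpos {c : ℝ} (hc : c ≤ 0) (x : ℝ) : relu (c * x) = c * x - c * relu x :=
  calc relu (c * x) = relu (-(-c * x)) := by rw [neg_mul, neg_neg]
    _ = -c * relu x - -c * x := by rw [relu_neg, relu_mul_of_nonneg (neg_nonneg.2 hc)]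
    _ = c * x - c * relu x := by ring

/-- The space of continuous piecewise linear splines with knots in `S`: the span of the affine
functions and the hinges `t ↦ σ(t - s)`, `s ∈ S`. -/
noncomputable def cplSpline (S : Set ℝ) : Submodule ℝ (ℝ → ℝ) :=
  Submodule.span ℝ ({1, id} ∪ (fun s t => relu (t - s)) '' S)

namespace cplSpline

variable {S T : Set ℝ} {f g h : ℝ → ℝ} {a : ℝ}

theorem mono (hST : S ⊆ T) : cplSpline S ≤ cplSpline T :=
  Submodule.span_mono (union_subset_union_right _ (image_mono hST))

theorem hinge_mem {s : ℝ} (hs : s ∈ S) : (fun t => relu (t - s)) ∈ cplSpline S :=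
  Submodule.subset_span (Or.inr (mem_image_of_mem _ hs))

theorem mem_empty_iff : f ∈ cplSpline ∅ ↔ ∃ p q : ℝ, f = fun t => p * t + q := by
  simp only [cplSpline, image_empty, union_empty, Submodule.mem_span_pair]
  refine exists_comm.trans (exists₂_congr fun p q => eq_comm.trans ?_)
  simp only [funext_iff, Pi.add_apply, Pi.smul_apply, Pi.one_apply, id_eq, smul_eq_mul, mul_one,
    add_comm]

theorem affine_mem (p q : ℝ) : (fun t => p * t + q) ∈ cplSpline S :=
  mono (empty_subset S) (mem_empty_iff.2 ⟨p, q, rfl⟩)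

theorem exists_eq_sum_of_mem_range {ι : Type*} [Fintype ι] {ξ : ι → ℝ}
    (hf : f ∈ cplSpline (range ξ)) :
    ∃ (q₀ q₁ : ℝ) (α : ι → ℝ), ∀ t, f t = q₁ * t + q₀ + ∑ k, α k * relu (t - ξ k) := by
  rw [cplSpline, Submodule.span_union, ← range_comp] at hf
  obtain ⟨u, hu, v, hv, rfl⟩ := Submodule.mem_sup.1 hf
  obtain ⟨q₁, q₀, rfl⟩ := mem_empty_iff.1 (by simpa only [cplSpline, image_empty, union_empty])
  obtain ⟨α, rfl⟩ := (Submodule.mem_span_range_iff_exists_fun ℝ).1 hv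
  exact ⟨q₀, q₁, α, fun t => by simp⟩

theorem comp_min_mem (hf : f ∈ cplSpline S) (a : ℝ) :
    (fun t => f (min t a)) ∈ cplSpline (insert a S) := by
  have hinge_a : (fun t => relu (t - a)) ∈ cplSpline (insert a S) := hinge_mem (mem_insert a S)
  induction hf using Submodule.span_induction with
  | mem f hf =>
    rcases hf with (rfl | rfl) | ⟨s, hs, rfl⟩
    · simpa using affine_mem 0 1
    · convert sub_mem (affine_mem 1 0) hinge_a using 1
      ext t
      rcases le_total t a with ht | ht
      · simp [ht, relu_of_nonpos (sub_nonpos.2 ht)]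
      · simp [ht, relu_of_nonneg (sub_nonneg.2 ht)]
    · rcases le_total s a with hsa | has
      · convert sub_mem (hinge_mem (mem_insert_of_mem a hs)) hinge_a using 1
        ext t
        rcases le_total t a with ht | ht
        · simp [ht, relu_of_nonpos (sub_nonpos.2 ht)]
        · simp [ht, relu_of_nonneg, hsa, hsa.trans ht]
      · convert zero_mem (cplSpline (insert a S)) using 1
        exact funext fun t => relu_of_nonpos (sub_nonpos.2 ((min_le_right t a).trans has))
  | zero => exact zero_mem _
  | add f g _ _ hf hg => exact add_mem hf hg
  | smul c f _ hf => exact Submodule.smul_mem _ c hf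

-- The glued function is `h + (g - h) ∘ (min · a)`.
theorem mem_of_eqOn_Iic_of_eqOn_Ici (hg : g ∈ cplSpline S) (hh : h ∈ cplSpline S)
    (hfg : EqOn f g (Iic a)) (hfh : EqOn f h (Ici a)) : f ∈ cplSpline (insert a S) := by
  have hgh : g a = h a := (hfg self_mem_Iic).symm.trans (hfh self_mem_Ici)
  convert add_mem (mono (subset_insert a S) hh) (comp_min_mem (sub_mem hg hh) a) using 1
  ext t
  rcases le_total t a with ht | ht
  · simp [ht, hfg ht]
  · simp [ht, hfh ht, hgh]

theorem exists_eqOn_of_forall_hinge {I : Set ℝ} (hf : f ∈ cplSpline S)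
    (hinge : ∀ s ∈ S, ∃ g ∈ cplSpline T, EqOn (fun t => relu (t - s)) g I) :
    ∃ g ∈ cplSpline T, EqOn f g I := by
  induction hf using Submodule.span_induction with
  | mem f hf =>
    rcases hf with hf | ⟨s, hs, rfl⟩
    · exact ⟨f, Submodule.subset_span (Or.inl hf), eqOn_refl f I⟩
    · exact hinge s hs
  | zero => exact ⟨0, zero_mem _, eqOn_refl 0 I⟩
  | add f₁ f₂ _ _ ih₁ ih₂ =>
    obtain ⟨g₁, hg₁, hfg₁⟩ := ih₁
    obtain ⟨g₂, hg₂, hfg₂⟩ := ih₂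
    exact ⟨g₁ + g₂, add_mem hg₁ hg₂, fun t ht => congrArg₂ (· + ·) (hfg₁ ht) (hfg₂ ht)⟩
  | smul c f _ ih =>
    obtain ⟨g, hg, hfg⟩ := ih
    exact ⟨c • g, Submodule.smul_mem _ c hg, fun t ht => congrArg (c • ·) (hfg ht)⟩

theorem exists_eqOn_Iic (hf : f ∈ cplSpline S) (a : ℝ) :
    ∃ g ∈ cplSpline (S ∩ Iio a), EqOn f g (Iic a) := by
  refine exists_eqOn_of_forall_hinge hf fun s hs => ?_
  rcases lt_or_ge s a with hsa | has
  · exact ⟨_, hinge_mem ⟨hs, hsa⟩, eqOn_refl _ _⟩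
  · exact ⟨0, zero_mem _, fun t ht => relu_of_nonpos (sub_nonpos.2 (ht.trans has))⟩

theorem exists_eqOn_Ici (hf : f ∈ cplSpline S) (a : ℝ) :
    ∃ g ∈ cplSpline (S ∩ Ioi a), EqOn f g (Ici a) := by
  refine exists_eqOn_of_forall_hinge hf fun s hs => ?_
  rcases le_or_gt s a with hsa | has
  · exact ⟨_, affine_mem 1 (-s), fun t ht => by
      simpa only [one_mul, ← sub_eq_add_neg] using
        relu_of_nonneg (sub_nonneg.2 (hsa.trans ht))⟩
  · exact ⟨_, hinge_mem ⟨hs, has⟩, eqOn_refl _ _⟩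

theorem exists_relu_affine_mem (p q : ℝ) : ∃ c, (fun t => relu (p * t + q)) ∈ cplSpline {c} := by
  rcases eq_or_ne p 0 with rfl | hp
  · exact ⟨0, by simpa using affine_mem 0 (relu q)⟩
  have hinge := hinge_mem (mem_singleton (-q / p))
  have factor (t : ℝ) : p * t + q = p * (t - -q / p) := by field_simp; ring
  refine ⟨-q / p, ?_⟩
  simp only [factor]
  rcases hp.lt_or_gt with hp | hp
  · convert add_mem (Submodule.smul_mem _ (-p) hinge) (affine_mem p q) using 1
    ext t
    simp only [relu_mul_of_nonpos hp.le, Pi.add_apply, Pi.smul_apply, smul_eq_mul, factor]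
    ring
  · simp only [relu_mul_of_nonneg hp.le]
    exact Submodule.smul_mem _ p hinge

theorem exists_relu_comp_mem (S : Finset ℝ) (hg : g ∈ cplSpline S) :
    ∃ T : Finset ℝ, T.card ≤ S.card + 1 ∧ (fun t => relu (g t)) ∈ cplSpline ↑(S ∪ T) := by
  induction S using Finset.induction_on_max generalizing g with
  | empty =>
    obtain ⟨p, q, rfl⟩ := mem_empty_iff.1 (by simpa using hg)
    obtain ⟨c, hc⟩ := exists_relu_affine_mem p q
    exact ⟨{c}, by simp, by simpa using hc⟩
  | insert a S hSa ih =>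
    obtain ⟨left, hleft, hg_left⟩ := exists_eqOn_Iic hg a
    obtain ⟨right, hright, hg_right⟩ := exists_eqOn_Ici hg a
    have left_knots : ↑(insert a S) ∩ Iio a ⊆ (S : Set ℝ) := by
      rintro s ⟨hs, hsa⟩
      exact Finset.mem_of_mem_insert_of_ne hs hsa.ne
    have right_knots : ↑(insert a S) ∩ Ioi a = (∅ : Set ℝ) := by
      ext s
      simp +contextual [or_imp, (hSa · · |>.le)]
    obtain ⟨p, q, rfl⟩ := mem_empty_iff.1 (right_knots ▸ hright)
    obtain ⟨T, hT, hrelu_left⟩ := ih (mono left_knots hleft)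
    obtain ⟨c, hrelu_right⟩ := exists_relu_affine_mem p q
    refine ⟨insert c T, ?_, ?_⟩
    · rw [Finset.card_insert_of_notMem fun ha => (hSa a ha).false]
      exact (Finset.card_insert_le c T).trans (Nat.succ_le_succ hT)
    · have hsub : S ∪ T ⊆ S ∪ insert c T :=
        Finset.union_subset_union_right (Finset.subset_insert c T)
      rw [Finset.insert_union, Finset.coe_insert]
      exact mem_of_eqOn_Iic_of_eqOn_Ici (mono (Finset.coe_subset.2 hsub) hrelu_left)
        (mono (by simp) hrelu_right) (hg_left.comp_left (g := relu))
        (hg_right.comp_left (g := relu))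

theorem exists_forall_relu_comp_mem {ι : Type*} [Fintype ι] (S : Finset ℝ) {G : ι → ℝ → ℝ}
    (hG : ∀ i, G i ∈ cplSpline S) :
    ∃ T : Finset ℝ, T.card + 1 ≤ (S.card + 1) * (Fintype.card ι + 1) ∧
      ∀ i, (fun t => relu (G i t)) ∈ cplSpline T := by
  choose T hT hmem using fun i => exists_relu_comp_mem S (hG i)
  refine ⟨S ∪ Finset.univ.biUnion T, ?_, fun i => mono (Finset.coe_subset.2 ?_) (hmem i)⟩
  · calc (S ∪ Finset.univ.biUnion T).card + 1
        ≤ S.card + Fintype.card ι * (S.card + 1) + 1 := by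
          gcongr
          refine (Finset.card_union_le _ _).trans (Nat.add_le_add_left ?_ _)
          exact Finset.card_biUnion_le_card_mul _ T _ fun i _ => hT i
      _ = (S.card + 1) * (Fintype.card ι + 1) := by ring
  · exact Finset.union_subset_union_right (Finset.subset_biUnion_of_mem T (Finset.mem_univ i))

theorem neuron_mem {ι : Type*} [Fintype ι] {G : ι → ℝ → ℝ} (hG : ∀ k, G k ∈ cplSpline S)
    (w : ι → ℝ) (c b : ℝ) : (fun t => (∑ k, w k * G k t) + t * c + b) ∈ cplSpline S := by
  have hsum : ∑ k, w k • G k ∈ cplSpline S :=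
    sum_mem fun k _ => Submodule.smul_mem _ (w k) (hG k)
  convert add_mem hsum (affine_mem c b) using 1
  ext t
  simp [mul_comm c, add_assoc]

end cplSpline

theorem IsDeepReLU.exists_mem_cplSpline {L : ℕ} {n : ℕ → ℕ} {f : ℝ → ℝ} (hL : 2 ≤ L)
    (hf : IsDeepReLU L n f) :
    ∃ S : Finset ℝ, S.card + 1 ≤ ∏ ℓ ∈ Finset.Icc 1 (L - 1), (n ℓ + 1) ∧ f ∈ cplSpline S := by
  obtain ⟨F, A₁, A, b, c, AL, cL, bL, hfirst, hstep, hout⟩ := hf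
  have activations (ℓ : ℕ) (hℓ : 1 ≤ ℓ) : ℓ ≤ L - 1 → ∃ S : Finset ℝ,
      S.card + 1 ≤ ∏ j ∈ Finset.Icc 1 ℓ, (n j + 1) ∧
        ∀ k, (fun t => relu (F ℓ t k)) ∈ cplSpline S := by
    induction ℓ, hℓ using Nat.le_induction with
    | base =>
      intro _
      have hF (k : Fin (n 1)) : (fun t => F 1 t k) ∈ cplSpline (∅ : Finset ℝ) := by
        simpa only [hfirst, mul_comm] using cplSpline.affine_mem (A₁ k) (b 1 k)
      simpa using cplSpline.exists_forall_relu_comp_mem ∅ hF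
    | succ ℓ hℓ ih =>
      intro hℓL
      obtain ⟨S, hcard, hS⟩ := ih (by omega)
      have hF (k : Fin (n (ℓ + 1))) : (fun t => F (ℓ + 1) t k) ∈ cplSpline S := by
        simpa only [hstep (ℓ + 1) (by omega) hℓL] using! cplSpline.neuron_mem hS (A (ℓ + 1) k) _ _
      obtain ⟨T, hTcard, hT⟩ := cplSpline.exists_forall_relu_comp_mem S hF
      refine ⟨T, ?_, hT⟩
      rw [Finset.prod_Icc_succ_top (by omega)]
      simpa using hTcard.trans (Nat.mul_le_mul_right _ hcard)
  obtain ⟨S, hcard, hS⟩ := activations (L - 1) (by omega) le_rfl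
  exact ⟨S, hcard, (funext hout : f = _) ▸ cplSpline.neuron_mem hS AL cL bL⟩

theorem eventually_sum_relu_eq_zero {ι : Type*} [Fintype ι] (α ξ : ι → ℝ) :
    ∀ᶠ t in atBot, ∑ k, α k * relu (t - ξ k) = 0 := by
  filter_upwards [eventually_all.2 fun k => eventually_le_atBot (ξ k)] with t ht
  exact Finset.sum_eq_zero fun k _ => by rw [relu_of_nonpos (sub_nonpos.2 (ht k)), mul_zero]

section EventuallyAffine

variable {f : ℝ → ℝ} {p q : ℝ}

theorem tendsto_deriv_atBot_of_eventuallyEq_affine (hf : f =ᶠ[atBot] fun t => p * t + q) :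
    Tendsto (deriv f) atBot (nhds p) := by
  obtain ⟨M, hM⟩ := eventually_atBot.1 hf
  refine tendsto_const_nhds.congr' ?_
  filter_upwards [eventually_lt_atBot M] with t ht
  have hnhds : f =ᶠ[nhds t] fun t => p * t + q := by
    filter_upwards [Iic_mem_nhds ht] with x hx using hM x hx
  simp [hnhds.deriv_eq]

theorem tendsto_sub_atBot_of_eventuallyEq_affine (hf : f =ᶠ[atBot] fun t => p * t + q) :
    Tendsto (fun t => f t - p * t) atBot (nhds q) :=
  tendsto_const_nhds.congr' (hf.mono fun t ht => by simp [ht])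

end EventuallyAffine

/-- every `f_L ∈ Y_{n₁,…,n_{L−1}}` is a CPL spline with at most
`∏_{ℓ=1}^{L−1}(n_ℓ+1) − 1` knots, where `q₁ = lim_{t→−∞} f_L′(t)` and
`q₀ = lim_{t→−∞}(f_L(t) − q₁ t)`. -/
theorem deep_relu_is_spline (L : ℕ) (hL : 2 ≤ L) (n : ℕ → ℕ) (f : ℝ → ℝ)
    (hf : IsDeepReLU L n f) :
    ∃ N, N ≤ (∏ ℓ ∈ Finset.Icc 1 (L - 1), (n ℓ + 1)) - 1 ∧
      ∃ (q0 q1 : ℝ) (α ξ : Fin N → ℝ), StrictMono ξ ∧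
        (∀ t, f t = q1 * t + q0 + ∑ k, α k * relu (t - ξ k)) ∧
        Filter.Tendsto (deriv f) Filter.atBot (nhds q1) ∧
        Filter.Tendsto (fun t => f t - q1 * t) Filter.atBot (nhds q0) := by
  obtain ⟨S, hcard, hS⟩ := hf.exists_mem_cplSpline hL
  let ξ := S.orderEmbOfFin rfl
  obtain ⟨q₀, q₁, α, hsum⟩ :=
    cplSpline.exists_eq_sum_of_mem_range (ξ := ξ) (by rwa [Finset.range_orderEmbOfFin])
  have haffine : f =ᶠ[Filter.atBot] fun t => q₁ * t + q₀ := by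
    filter_upwards [eventually_sum_relu_eq_zero α ξ] with t ht
    rw [hsum, ht, add_zero]
  exact ⟨S.card, Nat.le_sub_of_add_le hcard, q₀, q₁, α, ξ, ξ.strictMono, hsum,
    tendsto_deriv_atBot_of_eventuallyEq_affine haffine,
    tendsto_sub_atBot_of_eventuallyEq_affine haffine⟩
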